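/- arXiv:1412.2235 — 3 statements merged into one kernel-verified Lean document; each statement's English description precedes it below -/
import Mathlib

section
/- In a complete Heyting algebra A, for all a, b: the infimum over all x in A of ((a ⇨ (b ⇨ x)) ⇨ x) equals a ⊓ b. (This says the impredicative second-order encoding ∀P. (A → B → P) → P of conjunction is interpreted as the meet.) -/
/-!
In second-order terms, `∀ x, (c → x) → x` is equivalent to `c`: every instance follows from `c` by
modus ponens, and the instance at `x = c` is `c` itself. Currying turns `a → b → x` into
`a ∧ b → x`, so the encoding of conjunction is the case `c = a ∧ b`.
-/

theorem isLeast_range_himp_himp {A : Type*} [GeneralizedHeytingAlgebra A] (c : A) :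
    IsLeast (Set.range fun x : A => (c ⇨ x) ⇨ x) c := by
  constructor
  · exact ⟨c, by simp only [himp_self, top_himp]⟩
  · rintro _ ⟨x, rfl⟩
    exact le_himp_himp

theorem stmt_8_general {A : Type*} [GeneralizedHeytingAlgebra A] (a b : A) :
    IsLeast (Set.range fun x : A => (a ⇨ (b ⇨ x)) ⇨ x) (a ⊓ b) := by
  simpa only [himp_himp] using isLeast_range_himp_himp (a ⊓ b)

theorem stmt_8 {A : Type*} [Order.Frame A] (a b : A) :
    ⨅ x : A, ((a ⇨ (b ⇨ x)) ⇨ x) = a ⊓ b :=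
  (stmt_8_general a b).isGLB.iInf_eq
end

section
/- In a complete Heyting algebra A, for all a, b: the infimum over all x in A of ((a ⇨ x) ⇨ ((b ⇨ x) ⇨ x)) equals a ⊔ b. (This says the impredicative second-order encoding ∀P. (A → P) → (B → P) → P of disjunction is interpreted as the join.) -/
section GeneralizedHeytingAlgebra

variable {A : Type*} [GeneralizedHeytingAlgebra A]

theorem sup_himp_himp (a b c d : A) : (a ⊔ b ⇨ c) ⇨ d = (a ⇨ c) ⇨ (b ⇨ c) ⇨ d := by
  rw [sup_himp_distrib, himp_himp]

theorem isLeast_range_himp_himp_self (a : A) :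
    IsLeast (Set.range fun x : A => (a ⇨ x) ⇨ x) a := by
  refine ⟨⟨a, ?attained⟩, Set.forall_mem_range.2 fun _ => le_himp_himp⟩
  case attained => simp only [himp_self, top_himp]

theorem stmt_9_general (a b : A) :
    IsLeast (Set.range fun x : A => (a ⇨ x) ⇨ ((b ⇨ x) ⇨ x)) (a ⊔ b) := by
  simpa only [sup_himp_himp] using isLeast_range_himp_himp_self (a ⊔ b)

end GeneralizedHeytingAlgebra

theorem stmt_9 {A : Type*} [Order.Frame A] (a b : A) :
    ⨅ x : A, ((a ⇨ x) ⇨ ((b ⇨ x) ⇨ x)) = a ⊔ b :=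
  (stmt_9_general a b).isGLB.iInf_eq
end

section
/- In the frame of open sets of the Sierpiński space, the implication from the linearity axiom to the excluded middle is not valid: (⨅ U, ⨅ V, ((U ⇨ V) ⊔ (V ⇨ U))) ⇨ (⨅ U, (U ⊔ (U ⇨ ⊥))) is not equal to ⊤. (Hence the excluded middle cannot be deduced from the linearity axiom in ECC.) -/
open TopologicalSpace

/-!
In a totally ordered frame every instance of linearity has value `⊤`, while `a ⊔ aᶜ`, being the
larger of `a` and `aᶜ`, is `⊤` only if `a` is `⊥` or `⊤`. The open sets of a space are totally
ordered as soon as any two points are comparable under specialization. In the Sierpiński space they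
are, and `{True}` is an open set other than `∅` and the whole space.
-/

section TotalOrder

variable {α : Type*}

lemma himp_sup_himp_eq_top [GeneralizedHeytingAlgebra α] [Std.Total (α := α) (· ≤ ·)] (a b : α) :
    (a ⇨ b) ⊔ (b ⇨ a) = ⊤ := by
  rcases total_of (· ≤ ·) a b with h | h
  · rw [himp_eq_top_iff.2 h, top_sup_eq]
  · rw [himp_eq_top_iff.2 h, sup_top_eq]

lemma sup_compl_eq_top_iff_eq_bot_or_eq_top [HeytingAlgebra α] [Std.Total (α := α) (· ≤ ·)]
    {a : α} : a ⊔ aᶜ = ⊤ ↔ a = ⊥ ∨ a = ⊤ := by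
  constructor
  · intro h
    rcases total_of (· ≤ ·) a aᶜ with hle | hle
    · exact .inl (le_compl_self.1 hle)
    · exact .inr (sup_eq_left.2 hle ▸ h)
  · rintro (rfl | rfl) <;> simp

theorem stmt_15_general [Order.Frame α] [Std.Total (α := α) (· ≤ ·)] {a : α}
    (ha_bot : a ≠ ⊥) (ha_top : a ≠ ⊤) :
    ((⨅ u : α, ⨅ v : α, ((u ⇨ v) ⊔ (v ⇨ u))) ⇨ (⨅ u : α, (u ⊔ (u ⇨ ⊥)))) ≠ ⊤ := by
  simp only [himp_sup_himp_eq_top, iInf_top, top_himp, himp_bot, ne_eq, iInf_eq_top]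
  intro h
  exact (sup_compl_eq_top_iff_eq_bot_or_eq_top.1 (h a)).elim ha_bot ha_top

end TotalOrder

lemma total_le_opens_iff_total_specializes {X : Type*} [TopologicalSpace X] :
    Std.Total (α := Opens X) (· ≤ ·) ↔ Std.Total (α := X) (· ⤳ ·) := by
  refine ⟨fun h ↦ ⟨fun x y ↦ ?_⟩, fun h ↦ ⟨fun U V ↦ ?_⟩⟩
  · by_contra! ⟨hxy, hyx⟩
    obtain ⟨U, hU, hyU, hxU⟩ := not_specializes_iff_exists_open.1 hxy
    obtain ⟨V, hV, hxV, hyV⟩ := not_specializes_iff_exists_open.1 hyx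
    rcases h.total ⟨U, hU⟩ ⟨V, hV⟩ with hle | hle
    · exact hyV (hle hyU)
    · exact hxU (hle hxV)
  · by_contra! ⟨hUV, hVU⟩
    obtain ⟨x, hxU, hxV⟩ := SetLike.not_le_iff_exists.1 hUV
    obtain ⟨y, hyV, hyU⟩ := SetLike.not_le_iff_exists.1 hVU
    rcases h.total x y with hxy | hyx
    · exact hxV (hxy.mem_open V.isOpen hyV)
    · exact hyU (hyx.mem_open U.isOpen hxU)

lemma specializes_Prop_iff {p q : Prop} : p ⤳ q ↔ (q → p) :=
  specializes_iff_pure.trans (tendsto_nhds_Prop (l := pure p) (p := id))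

instance total_le_opens_Prop : Std.Total (α := Opens Prop) (· ≤ ·) :=
  total_le_opens_iff_total_specializes.2
    ⟨fun p q ↦ (le_total q p).imp specializes_Prop_iff.2 specializes_Prop_iff.2⟩

lemma exists_opens_Prop_ne_bot_ne_top : ∃ U : Opens Prop, U ≠ ⊥ ∧ U ≠ ⊤ := by
  let U : Opens Prop := ⟨{True}, isOpen_singleton_true⟩
  have hU_top : U ≠ ⊤ := fun h ↦ by
    have hFalse : False ∈ U := h ▸ Opens.mem_top False
    exact false_ne_true hFalse
  exact ⟨U, U.ne_bot_iff_nonempty.2 (Set.singleton_nonempty True), hU_top⟩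

theorem stmt_15 :
    ((⨅ U : Opens Prop, ⨅ V : Opens Prop, ((U ⇨ V) ⊔ (V ⇨ U))) ⇨
        (⨅ U : Opens Prop, (U ⊔ (U ⇨ ⊥)))) ≠ ⊤ := by
  obtain ⟨U, hU_bot, hU_top⟩ := exists_opens_Prop_ne_bot_ne_top
  exact stmt_15_general hU_bot hU_top
end
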